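/- First step of the quantitative strong maximum principle. For every integer n ≥ 2, reals 0 < λ ≤ Λ, exponent q > n, and K > 0, there exist constants δ₁ > 0 and c₁ > 0 such that the following holds. Let b : B₁ → ℝ be continuous, b ≥ 0, ‖b‖_{L^q(B₁)} ≤ K, and let u be a C² function on B₁ with u ≥ 0, such that g(x) := 𝓜⁻(D²u(x)) − b(x)|Du(x)| ≤ 0 for all x ∈ B₁. If |{x ∈ B₁ : −g(x) ≥ 1}| ≥ (1−δ₁)·|B₁|, then inf_{x ∈ B₁} u(x)/(1−|x|) ≥ c₁. -/

import Mathlib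

open MeasureTheory
open scoped ENNReal

/-- The Pucci minimal extremal operator `𝓜⁻(M)` with ellipticity constants `lam ≤ Lam`:
the infimum of `tr(A*M)` over symmetric matrices `A` with `lam•I ≤ A ≤ Lam•I`. -/
noncomputable def pucciMinus (n : ℕ) (lam Lam : ℝ) (M : Matrix (Fin n) (Fin n) ℝ) : ℝ :=
  sInf { t : ℝ | ∃ A : Matrix (Fin n) (Fin n) ℝ, A.IsSymm ∧
    (A - lam • (1 : Matrix (Fin n) (Fin n) ℝ)).PosSemidef ∧
    (Lam • (1 : Matrix (Fin n) (Fin n) ℝ) - A).PosSemidef ∧ t = (A * M).trace }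

/-- The Pucci maximal extremal operator `𝓜⁺(M)`. -/
noncomputable def pucciPlus (n : ℕ) (lam Lam : ℝ) (M : Matrix (Fin n) (Fin n) ℝ) : ℝ :=
  sSup { t : ℝ | ∃ A : Matrix (Fin n) (Fin n) ℝ, A.IsSymm ∧
    (A - lam • (1 : Matrix (Fin n) (Fin n) ℝ)).PosSemidef ∧
    (Lam • (1 : Matrix (Fin n) (Fin n) ℝ) - A).PosSemidef ∧ t = (A * M).trace }

/-- The Hessian matrix `D²u(x)` of `u` at `x`. -/
noncomputable def hess (n : ℕ) (u : EuclideanSpace ℝ (Fin n) → ℝ)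
    (x : EuclideanSpace ℝ (Fin n)) : Matrix (Fin n) (Fin n) ℝ :=
  fun i j => fderiv ℝ (fun y => fderiv ℝ u y (EuclideanSpace.single j (1 : ℝ))) x
    (EuclideanSpace.single i (1 : ℝ))

/-- The euclidean norm `|Du(x)|` of the gradient of `u` at `x`. -/
noncomputable def gradNorm (n : ℕ) (u : EuclideanSpace ℝ (Fin n) → ℝ)
    (x : EuclideanSpace ℝ (Fin n)) : ℝ := ‖fderiv ℝ u x‖

/-- The `L^p` norm `(∫_E |g|^p)^(1/p)`, as a Lebesgue integral valued in `[0,∞]`. -/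
noncomputable def LpNormE (n : ℕ) (p : ℝ) (g : EuclideanSpace ℝ (Fin n) → ℝ)
    (E : Set (EuclideanSpace ℝ (Fin n))) : ℝ≥0∞ :=
  (∫⁻ x in E, ENNReal.ofReal (|g x| ^ p)) ^ (1 / p)

/-- The last (`n`-th) coordinate `x_n` of a point of `ℝⁿ`. -/
def lastC (n : ℕ) (hn : 1 ≤ n) (x : EuclideanSpace ℝ (Fin n)) : ℝ := x ⟨n - 1, by omega⟩

/-- The open half-ball `B_R⁺ = {|x| < R, x_n > 0}`. -/
def halfBall (n : ℕ) (hn : 1 ≤ n) (R : ℝ) : Set (EuclideanSpace ℝ (Fin n)) :=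
  {x | ‖x‖ < R ∧ 0 < lastC n hn x}

/-- The flat boundary part `B_R⁰ = {|x| ≤ R, x_n = 0}`. -/
def flatB (n : ℕ) (hn : 1 ≤ n) (R : ℝ) : Set (EuclideanSpace ℝ (Fin n)) :=
  {x | ‖x‖ ≤ R ∧ lastC n hn x = 0}

/-- The norm `‖g‖_{L^{p,q}(B_R⁺)} = ‖g‖_{L^p(B_R⁺)} + ‖g‖_{L^q(B_R⁺ ∩ {x_n < d0})}`. -/
noncomputable def LpqNormHB (n : ℕ) (hn : 1 ≤ n) (p q d0 R : ℝ)
    (g : EuclideanSpace ℝ (Fin n) → ℝ) : ℝ≥0∞ :=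
  LpNormE n p g (halfBall n hn R) +
    LpNormE n q g {x ∈ halfBall n hn R | lastC n hn x < d0}

/-- The open cube `Q_ρ` of side `ρ` centered at `(0,…,0,ρ/2)`. -/
def cubeQ (n : ℕ) (hn : 1 ≤ n) (ρ : ℝ) : Set (EuclideanSpace ℝ (Fin n)) :=
  {x | (∀ i : Fin n, i.1 ≠ n - 1 → |x i| < ρ / 2) ∧ 0 < lastC n hn x ∧ lastC n hn x < ρ}

/-- The norm `‖g‖_{L^{p,q}(Q₂)} = ‖g‖_{L^p(Q₂)} + ‖g‖_{L^q(Q₂ ∩ {x_n < d0})}`. -/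
noncomputable def LpqNormQ (n : ℕ) (hn : 1 ≤ n) (p q d0 : ℝ)
    (g : EuclideanSpace ℝ (Fin n) → ℝ) : ℝ≥0∞ :=
  LpNormE n p g (cubeQ n hn 2) +
    LpNormE n q g {x ∈ cubeQ n hn 2 | lastC n hn x < d0}

/-!
Everything rests on the Alexandrov–Bakelman–Pucci argument: if `v` has an interior minimum that is
deep compared with its boundary values, its gradient covers a ball `B_t` from the contact set `Γ`,
so `|B_t| ≤ ∫_Γ (tr D²v)ⁿ`. With `v = u - φ` the equation gives `tr D²v ≲ |Dφ| b + (tr A D²φ)₋` on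
`Γ`, and as `q > n`, Hölder makes the `b`-term small when `|Γ|` is small.

Let `s = (1 - |x|²)/2`. In the interior `φ = c s`, and `Γ` is small because wherever `-g ≥ 1`
contact forces `b ≥ 1/(4c)`, which is rare by Markov's inequality; hence `u ≥ c s / 2` on `s ≥ r₀`.
Near the sphere `Γ` is small because the comparison is localised to a ball of radius `ρ(r) → 0`: a
lower bound `u ≥ m s` on `s ≥ r` extends to `u ≥ m (1 - C r^β) s` on `s ≥ r / 2`. Over dyadic radii
the losses sum to at most a factor `1 / 2`.
-/

section Matrix

variable {ι : Type*} [Fintype ι]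

lemma posSemidef_trace_mul_nonneg {A P : Matrix ι ι ℝ} (hA : A.PosSemidef) (hP : P.PosSemidef) :
    0 ≤ (A * P).trace := by
  classical
  obtain ⟨B, rfl⟩ : ∃ B : Matrix ι ι ℝ, P = B.conjTranspose * B := by
    open scoped MatrixOrder in
    exact CStarAlgebra.nonneg_iff_eq_star_mul_self.mp hP.nonneg
  rw [← Matrix.mul_assoc, Matrix.trace_mul_comm, ← Matrix.mul_assoc]
  exact (hA.mul_mul_conjTranspose_same B).trace_nonneg

variable [DecidableEq ι]

lemma det_le_trace_pow_card {P : Matrix ι ι ℝ} (hP : P.PosSemidef) :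
    P.det ≤ P.trace ^ Fintype.card ι := by
  rw [hP.isHermitian.det_eq_prod_eigenvalues, hP.isHermitian.trace_eq_sum_eigenvalues]
  simp only [RCLike.ofReal_real_eq_id, id]
  calc ∏ i, hP.isHermitian.eigenvalues i
      ≤ ∏ _i : ι, ∑ j, hP.isHermitian.eigenvalues j :=
        Finset.prod_le_prod (fun i _ => hP.eigenvalues_nonneg i) fun i _ =>
          Finset.single_le_sum (fun j _ => hP.eigenvalues_nonneg j) (Finset.mem_univ i)
    _ = (∑ j, hP.isHermitian.eigenvalues j) ^ Fintype.card ι := by simp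

lemma det_toEuclideanCLM (M : Matrix ι ι ℝ) :
    (Matrix.toEuclideanCLM (𝕜 := ℝ) M).det = M.det := by
  rw [ContinuousLinearMap.det, Matrix.coe_toEuclideanCLM_eq_toEuclideanLin,
    Matrix.toEuclideanLin, Matrix.toLpLin_eq_toLin, LinearMap.det_toLin]

/-- The coefficient matrices `lam • 1 ≤ A ≤ Lam • 1` over which the Pucci operators are taken. -/
def IsElliptic (lam Lam : ℝ) (A : Matrix ι ι ℝ) : Prop :=
  (A - lam • (1 : Matrix ι ι ℝ)).PosSemidef ∧ (Lam • (1 : Matrix ι ι ℝ) - A).PosSemidef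

namespace IsElliptic

variable {lam Lam : ℝ} {A P : Matrix ι ι ℝ}

lemma mul_trace_le_trace_mul (hA : IsElliptic lam Lam A) (hP : P.PosSemidef) :
    lam * P.trace ≤ (A * P).trace := by
  simpa [Matrix.sub_mul] using posSemidef_trace_mul_nonneg hA.1 hP

lemma trace_le (hA : IsElliptic lam Lam A) : A.trace ≤ Fintype.card ι * Lam := by
  simpa [mul_comm] using hA.2.trace_nonneg

lemma mul_dotProduct_self_le (hA : IsElliptic lam Lam A) (z : ι → ℝ) :
    lam * (z ⬝ᵥ z) ≤ z ⬝ᵥ A.mulVec z := by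
  simpa [Matrix.sub_mulVec, Matrix.smul_mulVec] using hA.1.dotProduct_mulVec_nonneg z

lemma le_trace_mul_add (hA : IsElliptic lam Lam A) {p β : ℝ} (hp : 0 ≤ p) (hβ : 0 ≤ β)
    (z : ι → ℝ) :
    β * lam * (z ⬝ᵥ z) - p * (Fintype.card ι * Lam) ≤
      (A * (-p • (1 : Matrix ι ι ℝ) + β • Matrix.vecMulVec z z)).trace := by
  have htrace : (A * Matrix.vecMulVec z z).trace = z ⬝ᵥ A.mulVec z := by
    rw [Matrix.mul_vecMulVec, Matrix.trace_vecMulVec, dotProduct_comm]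
  have hexpand : (A * (-p • (1 : Matrix ι ι ℝ) + β • Matrix.vecMulVec z z)).trace =
      β * (z ⬝ᵥ A.mulVec z) - p * A.trace := by
    simp only [Matrix.mul_add, Matrix.mul_smul, Matrix.mul_one, Matrix.trace_add,
      Matrix.trace_smul, smul_eq_mul, htrace]
    ring
  linarith [mul_le_mul_of_nonneg_left hA.trace_le hp,
    mul_le_mul_of_nonneg_left (hA.mul_dotProduct_self_le z) hβ]

end IsElliptic

lemma le_pucciMinus {n : ℕ} {lam Lam σ : ℝ} {M : Matrix (Fin n) (Fin n) ℝ} (hLam : lam ≤ Lam)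
    (h : ∀ A, IsElliptic lam Lam A → σ ≤ (A * M).trace) : σ ≤ pucciMinus n lam Lam M := by
  refine le_csInf ⟨_, lam • 1, by simp [Matrix.IsSymm], ?_, ?_, rfl⟩ ?_
  · simpa using Matrix.PosSemidef.zero
  · rw [← sub_smul]
    exact Matrix.PosSemidef.one.smul (sub_nonneg.2 hLam)
  · rintro _ ⟨A, -, hlower, hupper, rfl⟩
    exact h A ⟨hlower, hupper⟩

end Matrix

section SecondOrder

lemma deriv_deriv_nonneg_of_isLocalMin {g : ℝ → ℝ} {a : ℝ} (hmin : IsLocalMin g a)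
    (hg : ContinuousAt g a) : 0 ≤ deriv (deriv g) a := by
  by_contra! hneg
  have hmax := isLocalMax_of_deriv_deriv_neg hneg hmin.deriv_eq_zero hg
  have hconst : g =ᶠ[nhds a] fun _ => g a := by
    filter_upwards [hmin, hmax] with t h₁ h₂ using le_antisymm h₂ h₁
  simp [hconst.deriv.deriv_eq] at hneg

variable {E : Type*} [NormedAddCommGroup E] [NormedSpace ℝ E] {f : E → ℝ} {x : E}

lemma differentiableAt_fderiv (hf : ContDiffAt ℝ 2 f x) : DifferentiableAt ℝ (fderiv ℝ f) x :=
  (hf.fderiv_right (m := 1) (by norm_num)).differentiableAt one_ne_zero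

lemma deriv_deriv_add_smul (hf : ContDiffAt ℝ 2 f x) (z : E) :
    deriv (deriv fun t : ℝ => f (x + t • z)) 0 = fderiv ℝ (fderiv ℝ f) x z z := by
  have hline (t : ℝ) : HasDerivAt (fun t : ℝ => x + t • z) z t := by
    simpa using ((hasDerivAt_id t).smul_const z).const_add x
  have htendsto : Filter.Tendsto (fun t : ℝ => x + t • z) (nhds 0) (nhds x) := by
    simpa using (hline 0).continuousAt.tendsto
  have hderiv : (deriv fun t : ℝ => f (x + t • z)) =ᶠ[nhds 0]
      fun t => fderiv ℝ f (x + t • z) z := by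
    filter_upwards [htendsto.eventually (hf.eventually (by simp))] with t ht
    exact ((ht.differentiableAt two_ne_zero).hasFDerivAt.comp_hasDerivAt t (hline t)).deriv
  have hsecond : HasFDerivAt (fderiv ℝ f) (fderiv ℝ (fderiv ℝ f) x) (x + (0 : ℝ) • z) := by
    simpa using (differentiableAt_fderiv hf).hasFDerivAt
  have hcomp := hsecond.comp_hasDerivAt (0 : ℝ) (hline 0)
  have happly := hcomp.clm_apply (hasDerivAt_const (0 : ℝ) z)
  rw [hderiv.deriv_eq]
  simpa using happly.deriv

lemma fderiv_fderiv_nonneg_of_isLocalMin (hf : ContDiffAt ℝ 2 f x) (hmin : IsLocalMin f x)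
    (z : E) : 0 ≤ fderiv ℝ (fderiv ℝ f) x z z := by
  have hline : ContinuousAt (fun t : ℝ => x + t • z) 0 := by fun_prop
  have htendsto : Filter.Tendsto (fun t : ℝ => x + t • z) (nhds 0) (nhds x) := by
    simpa using hline.tendsto
  rw [← deriv_deriv_add_smul hf]
  refine deriv_deriv_nonneg_of_isLocalMin ?_
    (ContinuousAt.comp (by simpa using hf.continuousAt) hline)
  filter_upwards [htendsto.eventually hmin] with t ht
  simpa using ht

end SecondOrder

section Hessian

variable {n : ℕ} {v w : EuclideanSpace ℝ (Fin n) → ℝ} {x : EuclideanSpace ℝ (Fin n)}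

lemma hess_apply (hv : DifferentiableAt ℝ (fderiv ℝ v) x) (i j : Fin n) :
    hess n v x i j = fderiv ℝ (fderiv ℝ v) x (EuclideanSpace.single i 1)
      (EuclideanSpace.single j 1) := by
  simp [hess, fderiv_clm_apply hv (differentiableAt_const _)]

lemma hess_sub (hv : ContDiffAt ℝ 2 v x) (hw : ContDiffAt ℝ 2 w x) :
    hess n (v - w) x = hess n v x - hess n w x := by
  have hfderiv : fderiv ℝ (v - w) =ᶠ[nhds x] fderiv ℝ v - fderiv ℝ w := by
    filter_upwards [hv.eventually (by simp), hw.eventually (by simp)] with y hvy hwy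
    exact fderiv_sub (hvy.differentiableAt two_ne_zero) (hwy.differentiableAt two_ne_zero)
  ext i j
  have hsub : ContDiffAt ℝ 2 (v - w) x := hv.sub hw
  rw [Matrix.sub_apply, hess_apply (differentiableAt_fderiv hsub),
    hess_apply (differentiableAt_fderiv hv), hess_apply (differentiableAt_fderiv hw),
    hfderiv.fderiv_eq, fderiv_sub (differentiableAt_fderiv hv) (differentiableAt_fderiv hw)]
  rfl

lemma dotProduct_hess_mulVec (hv : DifferentiableAt ℝ (fderiv ℝ v) x) (z : Fin n → ℝ) :
    z ⬝ᵥ (hess n v x).mulVec z =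
      fderiv ℝ (fderiv ℝ v) x (WithLp.toLp 2 z) (WithLp.toLp 2 z) := by
  have hsum : WithLp.toLp 2 z = ∑ i, z i • EuclideanSpace.single i (1 : ℝ) := by
    simpa using ((EuclideanSpace.basisFun (Fin n) ℝ).sum_repr (WithLp.toLp 2 z)).symm
  simp only [hsum, map_sum, map_smul, sum_apply, smul_apply, dotProduct, Matrix.mulVec,
    hess_apply hv, smul_eq_mul, Finset.mul_sum]
  rw [Finset.sum_comm]
  exact Finset.sum_congr rfl fun i _ => Finset.sum_congr rfl fun j _ => by ring

lemma posSemidef_hess (hv : ContDiffAt ℝ 2 v x)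
    (h : ∀ z, 0 ≤ fderiv ℝ (fderiv ℝ v) x z z) : (hess n v x).PosSemidef := by
  have hdiff := differentiableAt_fderiv hv
  refine Matrix.PosSemidef.of_dotProduct_mulVec_nonneg ?_ fun z => ?_
  · ext i j
    rw [Matrix.conjTranspose_apply, star_trivial, hess_apply hdiff, hess_apply hdiff]
    exact hv.isSymmSndFDerivAt (by simp) _ _
  · rw [star_trivial, dotProduct_hess_mulVec hdiff]
    exact h _

lemma gradient_apply (i : Fin n) :
    gradient v x i = fderiv ℝ v x (EuclideanSpace.single i 1) := by
  have h := InnerProductSpace.toDual_symm_apply (𝕜 := ℝ) (x := EuclideanSpace.single i (1 : ℝ))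
    (y := fderiv ℝ v x)
  rw [real_inner_comm, EuclideanSpace.inner_single_left] at h
  simpa [gradient] using h

lemma hasFDerivAt_gradient (hv : DifferentiableAt ℝ (fderiv ℝ v) x) :
    HasFDerivAt (gradient v) (Matrix.toEuclideanCLM (𝕜 := ℝ) (hess n v x).transpose) x := by
  rw [← hasFDerivWithinAt_univ, hasFDerivWithinAt_euclidean]
  intro i
  simp only [gradient_apply, hasFDerivWithinAt_univ]
  refine (hv.hasFDerivAt.clm_apply (hasFDerivAt_const _ x)).congr_fderiv ?_
  refine ContinuousLinearMap.coe_injective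
    ((EuclideanSpace.basisFun (Fin n) ℝ).toBasis.ext fun j => ?_)
  simp [hess_apply hv]

end Hessian

section ContactSet

variable {E : Type*}

/-- The points of `D` with gradient at most `t` at which `v` is convex to second order. For `v` of
class `C²` it contains the lower contact points of `v` with affine functions of slope at most `t`;
working with this larger set makes it measurable without any hypothesis on `v`. -/
def contactSet [NormedAddCommGroup E] [NormedSpace ℝ E] (v : E → ℝ) (D : Set E) (t : ℝ) : Set E :=
  {x ∈ D | ‖fderiv ℝ v x‖ ≤ t ∧ ∀ z, 0 ≤ fderiv ℝ (fderiv ℝ v) x z z}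

lemma measurableSet_contactSet [NormedAddCommGroup E] [NormedSpace ℝ E] [MeasurableSpace E]
    [OpensMeasurableSpace E] {D : Set E} (hD : MeasurableSet D) (v : E → ℝ) (t : ℝ) :
    MeasurableSet (contactSet v D t) := by
  have hclosed : IsClosed {L : E →L[ℝ] E →L[ℝ] ℝ | ∀ z, 0 ≤ L z z} := by
    simp only [Set.ofPred_forall]
    exact isClosed_iInter fun z => isClosed_le continuous_const (by fun_prop)
  exact hD.inter ((measurableSet_le (measurable_fderiv ℝ v).norm measurable_const).inter
    (measurable_fderiv ℝ (fderiv ℝ v) hclosed.measurableSet))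

variable [NormedAddCommGroup E] [InnerProductSpace ℝ E] [CompleteSpace E] {v : E → ℝ} {D K : Set E}
  {t R : ℝ}

lemma mem_contactSet_of_isLocalMin_sub_inner {x p : E} (hv : ContDiffAt ℝ 2 v x) (hx : x ∈ D)
    (hp : ‖p‖ ≤ t) (hmin : IsLocalMin (fun y => v y - inner ℝ p y) x) :
    x ∈ contactSet v D t ∧ gradient v x = p := by
  have hfderiv : fderiv ℝ (fun y => v y - inner ℝ p y) =ᶠ[nhds x]
      fun y => fderiv ℝ v y - innerSL ℝ p := by
    filter_upwards [hv.eventually (by simp)] with y hy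
    exact ((hy.differentiableAt two_ne_zero).hasFDerivAt.sub (innerSL ℝ p).hasFDerivAt).fderiv
  have hcrit : fderiv ℝ v x = innerSL ℝ p :=
    sub_eq_zero.1 (hfderiv.self_of_nhds.symm.trans hmin.fderiv_eq_zero)
  have hsmooth : ContDiffAt ℝ 2 (fun y => v y - inner ℝ p y) x :=
    hv.sub (innerSL ℝ p).contDiff.contDiffAt
  refine ⟨⟨hx, by rwa [hcrit, innerSL_apply_norm], fun z => ?_⟩, ?_⟩
  · have h := fderiv_fderiv_nonneg_of_isLocalMin hsmooth hmin z
    rwa [hfderiv.fderiv_eq, fderiv_sub_const] at h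
  · rw [gradient, hcrit]
    exact (InnerProductSpace.toDual ℝ E).symm_apply_apply p

lemma ball_subset_gradient_image_contactSet {x₀ : E} (hK : IsCompact K) (hD : IsOpen D)
    (hDK : D ⊆ K) (hvK : ContinuousOn v K) (hvD : ∀ x ∈ D, ContDiffAt ℝ 2 v x) (hx₀ : x₀ ∈ D)
    (hR : ∀ x ∈ K, ‖x - x₀‖ ≤ R) (hboundary : ∀ x ∈ K \ D, v x₀ + t * R < v x) :
    Metric.ball 0 t ⊆ gradient v '' contactSet v D t := by
  intro p hp
  have hpt : ‖p‖ < t := by simpa using hp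
  obtain ⟨x, hxK, hmin⟩ := hK.exists_isMinOn ⟨x₀, hDK hx₀⟩
    (f := fun x => v x - inner ℝ p x) (by fun_prop)
  have hxD : x ∈ D := by
    by_contra hxD
    have hle : v x - inner ℝ p x ≤ v x₀ - inner ℝ p x₀ := hmin (hDK hx₀)
    have hinner : inner ℝ p x - inner ℝ p x₀ ≤ t * R := calc
      inner ℝ p x - inner ℝ p x₀ = inner ℝ p (x - x₀) := (inner_sub_right _ _ _).symm
      _ ≤ ‖p‖ * ‖x - x₀‖ := real_inner_le_norm _ _
      _ ≤ t * R := by gcongr; exacts [(norm_nonneg p).trans hpt.le, hR x hxK]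
    linarith [hboundary x ⟨hxK, hxD⟩]
  obtain ⟨hx, hgrad⟩ := mem_contactSet_of_isLocalMin_sub_inner (hvD x hxD) hxD hpt.le
    (hmin.isLocalMin (Filter.mem_of_superset (hD.mem_nhds hxD) hDK))
  exact ⟨x, hx, hgrad⟩

end ContactSet

-- The Alexandrov–Bakelman–Pucci estimate: push forward Lebesgue measure by the gradient map.
lemma volume_ball_le_lintegral_trace_hess_pow {n : ℕ} {v : EuclideanSpace ℝ (Fin n) → ℝ}
    {D K : Set (EuclideanSpace ℝ (Fin n))} {x₀ : EuclideanSpace ℝ (Fin n)} {t R : ℝ}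
    (hK : IsCompact K) (hD : IsOpen D) (hDK : D ⊆ K) (hvK : ContinuousOn v K)
    (hvD : ∀ x ∈ D, ContDiffAt ℝ 2 v x) (hx₀ : x₀ ∈ D) (hR : ∀ x ∈ K, ‖x - x₀‖ ≤ R)
    (hboundary : ∀ x ∈ K \ D, v x₀ + t * R < v x) :
    volume (Metric.ball (0 : EuclideanSpace ℝ (Fin n)) t) ≤
      ∫⁻ x in contactSet v D t, ENNReal.ofReal ((hess n v x).trace ^ n) := by
  have hmeas := measurableSet_contactSet hD.measurableSet v t
  have hdet : ∀ x ∈ contactSet v D t,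
      |(Matrix.toEuclideanCLM (𝕜 := ℝ) (hess n v x).transpose).det| ≤
        (hess n v x).trace ^ n := fun x hx => by
    have hpsd := posSemidef_hess (hvD x hx.1) hx.2.2
    rw [det_toEuclideanCLM, Matrix.det_transpose, abs_of_nonneg hpsd.det_nonneg]
    simpa using det_le_trace_pow_card hpsd
  calc volume (Metric.ball (0 : EuclideanSpace ℝ (Fin n)) t)
      ≤ volume (gradient v '' contactSet v D t) :=
        measure_mono (ball_subset_gradient_image_contactSet hK hD hDK hvK hvD hx₀ hR hboundary)
    _ ≤ ∫⁻ x in contactSet v D t,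
          ENNReal.ofReal |(Matrix.toEuclideanCLM (𝕜 := ℝ) (hess n v x).transpose).det| :=
        addHaar_image_le_lintegral_abs_det_fderiv volume hmeas fun x hx =>
          (hasFDerivAt_gradient (differentiableAt_fderiv (hvD x hx.1))).hasFDerivWithinAt
    _ ≤ ∫⁻ x in contactSet v D t, ENNReal.ofReal ((hess n v x).trace ^ n) :=
        setLIntegral_mono' hmeas fun x hx => ENNReal.ofReal_le_ofReal (hdet x hx)

section Integrability

variable {n : ℕ} {q A B t ρ : ℝ} {K : NNReal} {b w : EuclideanSpace ℝ (Fin n) → ℝ}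
  {Γ : Set (EuclideanSpace ℝ (Fin n))}

lemma LpNormE_eq_eLpNorm (hq : 0 < q) (b : EuclideanSpace ℝ (Fin n) → ℝ)
    (E : Set (EuclideanSpace ℝ (Fin n))) :
    LpNormE n q b E = eLpNorm b (ENNReal.ofReal q) (volume.restrict E) := by
  rw [eLpNorm_eq_lintegral_rpow_enorm_toReal (by simpa using hq) ENNReal.ofReal_ne_top,
    ENNReal.toReal_ofReal hq.le]
  simp [LpNormE, Real.enorm_eq_ofReal_abs, ENNReal.ofReal_rpow_of_nonneg, hq.le]

/-- The Lebesgue measure of the unit ball of `ℝⁿ`. -/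
noncomputable def unitBallVolume (n : ℕ) : ℝ :=
  volume.real (Metric.ball (0 : EuclideanSpace ℝ (Fin n)) 1)

lemma unitBallVolume_pos (n : ℕ) : 0 < unitBallVolume n :=
  ENNReal.toReal_pos (Metric.measure_ball_pos _ _ one_pos).ne' measure_ball_lt_top.ne

lemma volume_ball_zero (ht : 0 < t) : volume (Metric.ball (0 : EuclideanSpace ℝ (Fin n)) t) =
    ENNReal.ofReal (unitBallVolume n * t ^ n) := by
  rw [Measure.addHaar_ball_of_pos volume 0 ht, finrank_euclideanSpace_fin, mul_comm,
    ENNReal.ofReal_mul (unitBallVolume_pos n).le, unitBallVolume,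
    ofReal_measureReal measure_ball_lt_top.ne]

/-- The factor in the bound `‖b‖_{Lⁿ(Γ)} ≤ |B_ρ|^(1/n) * driftFactor n q K * ρ ^ (-n/q)`, valid if
`‖b‖_{L^q} ≤ K` and `|Γ| ≤ |B_ρ|`. -/
noncomputable def driftFactor (n : ℕ) (q : ℝ) (K : NNReal) : ℝ :=
  K * unitBallVolume n ^ (-(1 / q))

lemma driftFactor_nonneg : 0 ≤ driftFactor n q K :=
  mul_nonneg K.coe_nonneg (Real.rpow_nonneg (unitBallVolume_pos n).le _)

lemma lintegral_ofReal_pow_rpow_le {α : Type*} [MeasurableSpace α] {μ : Measure α} {b w : α → ℝ}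
    (hn : n ≠ 0) (hq : (n : ℝ) ≤ q) (hA : 0 ≤ A) (hB : 0 ≤ B) (hb : AEStronglyMeasurable b μ)
    (hw : ∀ᵐ x ∂μ, 0 ≤ w x ∧ w x ≤ A * b x + B) :
    (∫⁻ x, ENNReal.ofReal (w x ^ n) ∂μ) ^ (1 / (n : ℝ)) ≤
      ENNReal.ofReal A * (eLpNorm b (ENNReal.ofReal q) μ *
        μ Set.univ ^ (1 / (n : ℝ) - 1 / q)) + ENNReal.ofReal B * μ Set.univ ^ (1 / (n : ℝ)) := by
  have hn₀ : (n : ℝ≥0∞) ≠ 0 := by exact_mod_cast hn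
  have hw_norm : (∫⁻ x, ENNReal.ofReal (w x ^ n) ∂μ) ^ (1 / (n : ℝ)) ≤ eLpNorm w n μ := by
    rw [eLpNorm_eq_lintegral_rpow_enorm_toReal hn₀ (ENNReal.natCast_ne_top n),
      ENNReal.toReal_natCast]
    gcongr with x
    rw [ENNReal.rpow_natCast, ← enorm_pow]
    exact Real.ofReal_le_enorm _
  calc (∫⁻ x, ENNReal.ofReal (w x ^ n) ∂μ) ^ (1 / (n : ℝ))
      ≤ eLpNorm w n μ := hw_norm
    _ ≤ eLpNorm (A • b + fun _ => B) n μ := eLpNorm_mono_ae_real <| hw.mono fun x hx => by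
        simpa [abs_of_nonneg hx.1] using hx.2
    _ ≤ eLpNorm (A • b) n μ + eLpNorm (fun _ => B) n μ :=
        eLpNorm_add_le (hb.const_smul A) aestronglyMeasurable_const
          (by exact_mod_cast Nat.one_le_iff_ne_zero.2 hn)
    _ = ENNReal.ofReal A * eLpNorm b n μ + ENNReal.ofReal B * μ Set.univ ^ (1 / (n : ℝ)) := by
        rw [eLpNorm_const_smul, eLpNorm_const' B hn₀ (ENNReal.natCast_ne_top n),
          ENNReal.toReal_natCast, Real.enorm_of_nonneg hA, Real.enorm_of_nonneg hB]
    _ ≤ _ := by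
        have hnq : (n : ℝ≥0∞) ≤ ENNReal.ofReal q := by
          rw [← ENNReal.ofReal_natCast]
          exact ENNReal.ofReal_le_ofReal hq
        gcongr
        simpa [(Nat.cast_nonneg n).trans hq] using
          eLpNorm_le_eLpNorm_mul_rpow_measure_univ hnq hb

lemma mul_pow_rpow_one_div_sub {ω : ℝ} (hn : n ≠ 0) (hω : 0 < ω) (hρ : 0 < ρ) :
    (ω * ρ ^ n) ^ (1 / (n : ℝ) - 1 / q) =
      ω ^ (1 / (n : ℝ)) * (ω ^ (-(1 / q)) * ρ ^ (1 - n / q)) := by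
  rw [Real.mul_rpow hω.le (by positivity), ← Real.rpow_natCast, ← Real.rpow_mul hρ.le,
    ← mul_assoc, ← Real.rpow_add hω]
  congr 2
  field_simp

lemma le_of_volume_ball_le_lintegral (hn : n ≠ 0) (hq : (n : ℝ) ≤ q) (ht : 0 < t) (hρ : 0 < ρ)
    (hA : 0 ≤ A) (hB : 0 ≤ B) (hΓ : MeasurableSet Γ)
    (hb : AEStronglyMeasurable b (volume.restrict Γ))
    (hbK : eLpNorm b (ENNReal.ofReal q) (volume.restrict Γ) ≤ K)
    (hΓρ : volume Γ ≤ volume (Metric.ball (0 : EuclideanSpace ℝ (Fin n)) ρ))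
    (hw : ∀ x ∈ Γ, 0 ≤ w x ∧ w x ≤ A * b x + B)
    (hball : volume (Metric.ball (0 : EuclideanSpace ℝ (Fin n)) t) ≤
      ∫⁻ x in Γ, ENNReal.ofReal (w x ^ n)) :
    t ≤ A * (driftFactor n q K * ρ ^ (1 - n / q)) + B * ρ := by
  set ω := unitBallVolume n
  have hω : 0 < ω := unitBallVolume_pos n
  have hn₀ : (0 : ℝ) < n := by exact_mod_cast Nat.pos_of_ne_zero hn
  have hexp : 0 ≤ 1 / (n : ℝ) - 1 / q := sub_nonneg.2 (one_div_le_one_div_of_le hn₀ hq)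
  have hnorm : ENNReal.ofReal (ω * t ^ n) ^ (1 / (n : ℝ)) ≤
      ENNReal.ofReal A * (K * ENNReal.ofReal (ω * ρ ^ n) ^ (1 / (n : ℝ) - 1 / q)) +
        ENNReal.ofReal B * ENNReal.ofReal (ω * ρ ^ n) ^ (1 / (n : ℝ)) := by
    rw [← volume_ball_zero ht, ← volume_ball_zero hρ]
    refine (ENNReal.rpow_le_rpow hball (by positivity)).trans
      ((lintegral_ofReal_pow_rpow_le hn hq hA hB hb
        ((ae_restrict_iff' hΓ).2 (.of_forall hw))).trans ?_)
    rw [Measure.restrict_apply_univ]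
    gcongr
  have hroot {s : ℝ} (hs : 0 < s) : (ω * s ^ n) ^ (1 / (n : ℝ)) = ω ^ (1 / (n : ℝ)) * s := by
    rw [Real.mul_rpow hω.le (by positivity), one_div, Real.pow_rpow_inv_natCast hs.le hn]
  rw [ENNReal.ofReal_rpow_of_nonneg (by positivity) (by positivity),
    ENNReal.ofReal_rpow_of_nonneg (by positivity) hexp,
    ENNReal.ofReal_rpow_of_nonneg (by positivity) (by positivity), ← ENNReal.ofReal_coe_nnreal,
    ← ENNReal.ofReal_mul K.coe_nonneg, ← ENNReal.ofReal_mul hA, ← ENNReal.ofReal_mul hB,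
    ← ENNReal.ofReal_add (by positivity) (by positivity),
    ENNReal.ofReal_le_ofReal_iff (by positivity), hroot ht, hroot hρ,
    mul_pow_rpow_one_div_sub hn hω hρ] at hnorm
  refine le_of_mul_le_mul_left (hnorm.trans_eq ?_) (Real.rpow_pos_of_pos hω (1 / (n : ℝ)))
  rw [driftFactor]
  ring

lemma measure_le_ofReal_rpow_of_eLpNorm_le {α : Type*} [MeasurableSpace α] {μ : Measure α}
    {b : α → ℝ} {a : ℝ} (hq : 0 < q) (ha : 0 < a) (hb : AEStronglyMeasurable b μ)
    (hbK : eLpNorm b (ENNReal.ofReal q) μ ≤ K) :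
    μ {x | a ≤ b x} ≤ ENNReal.ofReal ((K / a) ^ q) := by
  have hmarkov := meas_ge_le_mul_pow_eLpNorm_enorm (p := ENNReal.ofReal q) μ (by simpa using hq)
    ENNReal.ofReal_ne_top hb (ε := ENNReal.ofReal a) (by simpa using ha) (by simp)
  rw [ENNReal.toReal_ofReal hq.le, ← ENNReal.mul_rpow_of_nonneg _ _ hq.le] at hmarkov
  calc μ {x | a ≤ b x} ≤ μ {x | ENNReal.ofReal a ≤ ‖b x‖ₑ} := measure_mono fun x hx =>
        (ENNReal.ofReal_le_ofReal hx).trans (Real.ofReal_le_enorm _)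
    _ ≤ ((ENNReal.ofReal a)⁻¹ * K) ^ q := hmarkov.trans (by gcongr)
    _ = ENNReal.ofReal ((K / a) ^ q) := by
        rw [← ENNReal.ofReal_rpow_of_nonneg (by positivity) hq.le, ENNReal.ofReal_div_of_pos ha,
          ENNReal.ofReal_coe_nnreal, ENNReal.div_eq_inv_mul]

lemma measure_le_of_disjoint_of_le_measure {α : Type*} [MeasurableSpace α] {μ : Measure α}
    {S E U : Set α} {δ : ℝ} (hE : NullMeasurableSet E μ) (hSU : S ⊆ U) (hEU : E ⊆ U)
    (hdisj : Disjoint S E) (hU : μ U ≠ ∞)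
    (hS : ENNReal.ofReal (1 - δ) * μ U ≤ μ S) : μ E ≤ ENNReal.ofReal δ * μ U := by
  refine (ENNReal.add_le_add_iff_left (ne_top_of_le_ne_top hU (measure_mono hSU))).1 ?_
  calc μ S + μ E = μ (S ∪ E) := (measure_union₀ hE hdisj.aedisjoint).symm
    _ ≤ μ U := measure_mono (Set.union_subset hSU hEU)
    _ = ENNReal.ofReal (1 - δ + δ) * μ U := by simp
    _ ≤ (ENNReal.ofReal (1 - δ) + ENNReal.ofReal δ) * μ U := by
        gcongr
        exact ENNReal.ofReal_add_le
    _ ≤ μ S + ENNReal.ofReal δ * μ U := by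
        rw [add_mul]
        gcongr

end Integrability

section Supersolution

variable {n : ℕ} {lam Lam q G R t σ B ρ : ℝ} {K : NNReal} {b u φ : EuclideanSpace ℝ (Fin n) → ℝ}
  {D C : Set (EuclideanSpace ℝ (Fin n))} {x x₀ : EuclideanSpace ℝ (Fin n)}

/-- The extremal operator with drift, `𝓜⁻(D²u) - b|Du|`. -/
noncomputable def pucciDrift (n : ℕ) (lam Lam : ℝ) (b u : EuclideanSpace ℝ (Fin n) → ℝ)
    (x : EuclideanSpace ℝ (Fin n)) : ℝ :=
  pucciMinus n lam Lam (hess n u x) - b x * gradNorm n u x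

/-- `u` is a nonnegative classical solution of `𝓜⁻(D²u) - b|Du| ≤ 0` in the unit ball, where the
drift `b` is nonnegative with `‖b‖_{L^q} ≤ K`. -/
structure IsNonnegSupersolution (n : ℕ) (lam Lam q : ℝ) (K : NNReal)
    (b u : EuclideanSpace ℝ (Fin n) → ℝ) : Prop where
  drift_aemeasurable : AEMeasurable b (volume.restrict (Metric.ball 0 1))
  drift_nonneg : ∀ x ∈ Metric.ball (0 : EuclideanSpace ℝ (Fin n)) 1, 0 ≤ b x
  drift_norm_le : LpNormE n q b (Metric.ball 0 1) ≤ K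
  contDiffOn : ContDiffOn ℝ 2 u (Metric.ball 0 1)
  nonneg : ∀ x ∈ Metric.ball (0 : EuclideanSpace ℝ (Fin n)) 1, 0 ≤ u x
  pucciDrift_nonpos : ∀ x ∈ Metric.ball (0 : EuclideanSpace ℝ (Fin n)) 1,
    pucciDrift n lam Lam b u x ≤ 0

lemma IsNonnegSupersolution.contDiffAt (hu : IsNonnegSupersolution n lam Lam q K b u)
    (hx : x ∈ Metric.ball 0 1) : ContDiffAt ℝ 2 u x :=
  hu.contDiffOn.contDiffAt (Metric.isOpen_ball.mem_nhds hx)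

lemma IsNonnegSupersolution.eLpNorm_drift_le (hu : IsNonnegSupersolution n lam Lam q K b u)
    (hq : 0 < q) :
    eLpNorm b (ENNReal.ofReal q) (volume.restrict (Metric.ball 0 1)) ≤ K :=
  LpNormE_eq_eLpNorm hq b _ ▸ hu.drift_norm_le

lemma mul_trace_hess_sub_le_pucciDrift (hLam : lam ≤ Lam) (hu : ContDiffAt ℝ 2 u x)
    (hφ : ContDiffAt ℝ 2 φ x) (hb : 0 ≤ b x) (hx : x ∈ contactSet (u - φ) D t)
    (hσ : ∀ A, IsElliptic lam Lam A → σ ≤ (A * hess n φ x).trace) (hG : ‖fderiv ℝ φ x‖ ≤ G) :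
    lam * (hess n (u - φ) x).trace + σ - b x * (G + t) ≤ pucciDrift n lam Lam b u x := by
  have hpucci : lam * (hess n (u - φ) x).trace + σ ≤ pucciMinus n lam Lam (hess n u x) := by
    refine le_pucciMinus hLam fun A hA => ?_
    have hpsd := posSemidef_hess (hu.sub hφ) hx.2.2
    have hsplit : hess n u x = hess n (u - φ) x + hess n φ x := by simp [hess_sub hu hφ]
    rw [hsplit, Matrix.mul_add, Matrix.trace_add]
    exact add_le_add (hA.mul_trace_le_trace_mul hpsd) (hσ A hA)
  have hgrad : gradNorm n u x ≤ G + t := by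
    have hsub := hx.2.1
    rw [fderiv_sub (hu.differentiableAt two_ne_zero) (hφ.differentiableAt two_ne_zero)] at hsub
    calc ‖fderiv ℝ u x‖ = ‖fderiv ℝ φ x + (fderiv ℝ u x - fderiv ℝ φ x)‖ := by simp
      _ ≤ G + t := (norm_add_le _ _).trans (add_le_add hG hsub)
  exact sub_le_sub hpucci (mul_le_mul_of_nonneg_left hgrad hb)

lemma IsNonnegSupersolution.slope_le (hu : IsNonnegSupersolution n lam Lam q K b u)
    (hn : n ≠ 0) (hlam : 0 < lam) (hLam : lam ≤ Lam) (hq : (n : ℝ) ≤ q) (hφ : ContDiff ℝ 2 φ)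
    (hC : IsCompact C) (hD : IsOpen D) (hDC : D ⊆ C) (hCball : C ⊆ Metric.ball 0 1)
    (hx₀ : x₀ ∈ D) (hR : ∀ x ∈ C, ‖x - x₀‖ ≤ R)
    (hboundary : ∀ x ∈ C \ D, u x₀ - φ x₀ + t * R < u x - φ x)
    (ht : 0 < t) (hρ : 0 < ρ) (hB : 0 ≤ B) (hG : ∀ x ∈ D, ‖fderiv ℝ φ x‖ ≤ G)
    (hφB : ∀ x ∈ D, ∀ A, IsElliptic lam Lam A → -(lam * B) ≤ (A * hess n φ x).trace)
    (hvol : volume (contactSet (u - φ) D t) ≤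
      volume (Metric.ball (0 : EuclideanSpace ℝ (Fin n)) ρ)) :
    t ≤ (G + t) / lam * (driftFactor n q K * ρ ^ (1 - n / q)) + B * ρ := by
  have hq₀ : 0 < q := lt_of_lt_of_le (by exact_mod_cast Nat.pos_of_ne_zero hn) hq
  have hG₀ : 0 ≤ G := (norm_nonneg _).trans (hG x₀ hx₀)
  have hball {x} (hx : x ∈ D) := hCball (hDC hx)
  have hΓball : contactSet (u - φ) D t ⊆ Metric.ball 0 1 := fun x hx => hball hx.1
  have hΓ := volume.restrict_mono_set hΓball
  refine le_of_volume_ball_le_lintegral hn hq ht hρ (by positivity) hB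
    (measurableSet_contactSet hD.measurableSet _ t)
    (hu.drift_aemeasurable.mono_measure hΓ).aestronglyMeasurable
    ((eLpNorm_mono_measure b hΓ).trans (hu.eLpNorm_drift_le hq₀)) hvol (fun x hx => ⟨?_, ?_⟩)
    (volume_ball_le_lintegral_trace_hess_pow hC hD hDC
      ((hu.contDiffOn.continuousOn.mono hCball).sub hφ.continuous.continuousOn)
      (fun x hx => (hu.contDiffAt (hball hx)).sub hφ.contDiffAt) hx₀ hR hboundary)
  · exact (posSemidef_hess ((hu.contDiffAt (hball hx.1)).sub hφ.contDiffAt) hx.2.2).trace_nonneg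
  · have hcontact := mul_trace_hess_sub_le_pucciDrift hLam (hu.contDiffAt (hball hx.1))
      hφ.contDiffAt (hu.drift_nonneg x (hball hx.1)) hx (hφB x hx.1) (hG x hx.1)
    have hnonpos := hu.pucciDrift_nonpos x (hball hx.1)
    rw [div_mul_eq_mul_div, div_add' _ _ _ hlam.ne', le_div_iff₀ hlam]
    linarith

end Supersolution

section Barrier

variable {E : Type*} [NormedAddCommGroup E]

/-- `(1 - |x|²)/2`, a smooth function comparable with the distance to the unit sphere. -/
noncomputable def sphereDefect (x : E) : ℝ := (1 - ‖x‖ ^ 2) / 2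

lemma sphereDefect_pos_iff {x : E} : 0 < sphereDefect x ↔ x ∈ Metric.ball 0 1 := by
  rw [mem_ball_zero_iff, ← sq_lt_one_iff₀ (norm_nonneg x), sphereDefect]
  constructor <;> intro h <;> linarith

lemma sphereDefect_le_half (x : E) : sphereDefect x ≤ 1 / 2 := by
  rw [sphereDefect]
  linarith [sq_nonneg ‖x‖]

lemma half_one_sub_norm_le_sphereDefect {x : E} (hx : ‖x‖ ≤ 1) :
    (1 - ‖x‖) / 2 ≤ sphereDefect x := by
  rw [sphereDefect]
  nlinarith [norm_nonneg x]

variable [InnerProductSpace ℝ E] {a β μ : ℝ} {x₀ x : E}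

/-- The radial barrier `a s + β s²` with `s = (1 - |x|²)/2`, bent down by `μ |x - x₀|²`: the term
`β s²` makes it a subsolution near the sphere, and the last one localises it around `x₀`. -/
noncomputable def barrier (a β μ : ℝ) (x₀ x : E) : ℝ :=
  a * sphereDefect x + β * sphereDefect x ^ 2 - μ * ‖x - x₀‖ ^ 2

lemma contDiff_sphereDefect : ContDiff ℝ 2 (sphereDefect : E → ℝ) := by
  have hnorm := contDiff_norm_sq ℝ (E := E) (n := 2)
  unfold sphereDefect
  fun_prop

lemma contDiff_barrier : ContDiff ℝ 2 (barrier a β μ x₀) := by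
  have hs : ContDiff ℝ 2 (sphereDefect : E → ℝ) := contDiff_sphereDefect
  have hnorm : ContDiff ℝ 2 fun x => ‖x - x₀‖ ^ 2 :=
    (contDiff_norm_sq ℝ).comp (contDiff_id.sub contDiff_const)
  unfold barrier
  fun_prop

lemma hasFDerivAt_sphereDefect : HasFDerivAt sphereDefect (-innerSL ℝ x) x := by
  have h := ((hasStrictFDerivAt_norm_sq x).hasFDerivAt.const_sub 1).mul_const (1 / 2 : ℝ)
  refine (h.congr_of_eventuallyEq (.of_forall fun y => ?_)).congr_fderiv ?_
  · simp [sphereDefect, div_eq_mul_inv]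
  · ext z
    simp

lemma fderiv_barrier : fderiv ℝ (barrier a β μ x₀) x =
    -(a + 2 * β * sphereDefect x) • innerSL ℝ x - (2 * μ) • innerSL ℝ (x - x₀) := by
  have hs : HasFDerivAt sphereDefect (-innerSL ℝ x) x := hasFDerivAt_sphereDefect
  have hnorm : HasFDerivAt (fun x => ‖x - x₀‖ ^ 2) (2 • innerSL ℝ (x - x₀)) x :=
    ((hasFDerivAt_id x).sub_const x₀).norm_sq
  have h := ((hs.const_mul a).add ((hs.pow 2).const_mul β)).sub (hnorm.const_mul μ)
  refine (HasFDerivAt.fderiv h).trans ?_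
  ext z
  simp only [smul_neg, Nat.add_one_sub_one, pow_one, nsmul_eq_mul, Nat.cast_ofNat, map_sub,
    sub_apply, add_apply, neg_apply, smul_apply, coe_innerSL_apply, smul_eq_mul, neg_add_rev]
  ring

lemma norm_fderiv_barrier_le (ha : 0 ≤ a) (hβ : 0 ≤ β) (hμ : 0 ≤ μ) (hx : x ∈ Metric.ball 0 1) :
    ‖fderiv ℝ (barrier a β μ x₀) x‖ ≤ a + 2 * β * sphereDefect x + 2 * μ * ‖x - x₀‖ := by
  have hnorm : ‖x‖ ≤ 1 := (mem_ball_zero_iff.1 hx).le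
  have hs := (sphereDefect_pos_iff.2 hx).le
  rw [fderiv_barrier]
  refine (norm_sub_le _ _).trans (add_le_add ?_ ?_)
  · rw [norm_smul, innerSL_apply_norm, norm_neg, Real.norm_of_nonneg (by positivity)]
    exact mul_le_of_le_one_right (by positivity) hnorm
  · rw [norm_smul, innerSL_apply_norm, Real.norm_of_nonneg (by positivity)]

lemma hess_barrier {n : ℕ} {x x₀ : EuclideanSpace ℝ (Fin n)} :
    hess n (barrier a β μ x₀) x =
      -(a + 2 * β * sphereDefect x + 2 * μ) • (1 : Matrix (Fin n) (Fin n) ℝ) +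
        (2 * β) • Matrix.vecMulVec x x := by
  ext i j
  have hs : HasFDerivAt sphereDefect (-innerSL ℝ x) x := hasFDerivAt_sphereDefect
  have hcoord (y : EuclideanSpace ℝ (Fin n)) :
      fderiv ℝ (barrier a β μ x₀) y (EuclideanSpace.single j 1) =
        -(a + 2 * β * sphereDefect y) * y j - 2 * μ * (y j - x₀ j) := by
    simp [fderiv_barrier, EuclideanSpace.inner_single_right]
  have hproj : HasFDerivAt (fun y : EuclideanSpace ℝ (Fin n) => y j)
      (EuclideanSpace.proj j : EuclideanSpace ℝ (Fin n) →L[ℝ] ℝ) x :=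
    PiLp.hasFDerivAt_apply 2 x j
  have h := (((hs.const_mul (2 * β)).const_add a).neg.mul hproj).sub
    ((hproj.sub_const (x₀ j)).const_mul (2 * μ))
  rw [hess, funext hcoord]
  refine (DFunLike.congr_fun (HasFDerivAt.fderiv h) _).trans ?_
  simp only [Pi.neg_apply, neg_add_rev, smul_neg, neg_neg, sub_apply, add_apply, smul_apply,
    PiLp.proj_apply, PiLp.single_apply, eq_comm (a := j), smul_eq_mul, mul_ite, mul_one, mul_zero,
    coe_innerSL_apply, EuclideanSpace.inner_single_right, Real.ringHom_apply, one_mul,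
    Matrix.add_apply, Matrix.smul_apply, Matrix.one_apply, Matrix.vecMulVec_apply]
  split_ifs <;> ring

lemma le_trace_mul_hess_barrier {n : ℕ} {lam Lam : ℝ} {x x₀ : EuclideanSpace ℝ (Fin n)}
    {A : Matrix (Fin n) (Fin n) ℝ} (hA : IsElliptic lam Lam A) (ha : 0 ≤ a) (hβ : 0 ≤ β)
    (hμ : 0 ≤ μ) (hx : x ∈ Metric.ball 0 1) :
    2 * β * lam * ‖x‖ ^ 2 - (a + 2 * β * sphereDefect x + 2 * μ) * (n * Lam) ≤
      (A * hess n (barrier a β μ x₀) x).trace := by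
  have hs := (sphereDefect_pos_iff.2 hx).le
  have hnorm : x.ofLp ⬝ᵥ x.ofLp = ‖x‖ ^ 2 := by
    rw [EuclideanSpace.real_norm_sq_eq]
    simp only [dotProduct, sq]
  have h := hA.le_trace_mul_add (p := a + 2 * β * sphereDefect x + 2 * μ) (β := 2 * β)
    (by positivity) (by positivity) x
  rwa [hnorm, Fintype.card_fin, ← hess_barrier] at h

end Barrier

section Layer

variable {E : Type*} [NormedAddCommGroup E] {x₀ x : E} {ρ η r : ℝ}

/-- The points of the open ball `B_ρ(x₀)` at which `η < (1 - |x|²)/2 < r`. -/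
def openLayer (x₀ : E) (ρ η r : ℝ) : Set E :=
  Metric.ball x₀ ρ ∩ sphereDefect ⁻¹' Set.Ioo η r

/-- The points of the closed ball `B_ρ(x₀)` at which `η ≤ (1 - |x|²)/2 ≤ r`. -/
def closedLayer (x₀ : E) (ρ η r : ℝ) : Set E :=
  Metric.closedBall x₀ ρ ∩ sphereDefect ⁻¹' Set.Icc η r

lemma continuous_sphereDefect : Continuous (sphereDefect : E → ℝ) := by
  unfold sphereDefect
  fun_prop

lemma isOpen_openLayer : IsOpen (openLayer x₀ ρ η r) :=
  Metric.isOpen_ball.inter (isOpen_Ioo.preimage continuous_sphereDefect)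

lemma isCompact_closedLayer [ProperSpace E] : IsCompact (closedLayer x₀ ρ η r) :=
  (isCompact_closedBall x₀ ρ).inter_right (isClosed_Icc.preimage continuous_sphereDefect)

lemma openLayer_subset_closedLayer : openLayer x₀ ρ η r ⊆ closedLayer x₀ ρ η r :=
  Set.inter_subset_inter Metric.ball_subset_closedBall
    (Set.preimage_mono Set.Ioo_subset_Icc_self)

lemma closedLayer_subset_ball (hη : 0 < η) : closedLayer x₀ ρ η r ⊆ Metric.ball 0 1 :=
  fun _ hx => sphereDefect_pos_iff.1 (hη.trans_le hx.2.1)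

lemma eq_of_mem_closedLayer_diff_openLayer
    (hx : x ∈ closedLayer x₀ ρ η r \ openLayer x₀ ρ η r) :
    ‖x - x₀‖ = ρ ∨ sphereDefect x = η ∨ sphereDefect x = r := by
  obtain ⟨⟨hball, hlower, hupper⟩, hx⟩ := hx
  by_contra! hne
  exact hx ⟨mem_ball_iff_norm.2 (lt_of_le_of_ne (mem_closedBall_iff_norm.1 hball) hne.1),
    lt_of_le_of_ne hlower hne.2.1.symm, lt_of_le_of_ne hupper hne.2.2⟩

/-- The barrier `m ((1 - ε) s + (ε/r) s² - (r/ρ²) |x - x₀|²)` with `s = (1 - |x|²)/2`. Where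
`0 ≤ s ≤ r` it lies below `m s` and is nonpositive on `|x - x₀| = ρ`, yet it is at least
`m (1 - ε) s` at `x₀`. -/
noncomputable def layerBarrier [InnerProductSpace ℝ E] (m ε r ρ : ℝ) (x₀ : E) : E → ℝ :=
  barrier (m * (1 - ε)) (m * ε / r) (m * r / ρ ^ 2) x₀

variable [InnerProductSpace ℝ E] {m ε : ℝ} {u : E → ℝ}

lemma layerBarrier_le (hm : 0 ≤ m) (hε : 0 ≤ ε) (hr : 0 < r) (hs : 0 ≤ sphereDefect x)
    (hsr : sphereDefect x ≤ r) :
    layerBarrier m ε r ρ x₀ x ≤ m * sphereDefect x - m * r / ρ ^ 2 * ‖x - x₀‖ ^ 2 := by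
  have hquad : m * ε / r * sphereDefect x ^ 2 ≤ m * ε * sphereDefect x := calc
    m * ε / r * sphereDefect x ^ 2 = m * ε * sphereDefect x * (sphereDefect x / r) := by ring
    _ ≤ m * ε * sphereDefect x :=
      mul_le_of_le_one_right (by positivity) ((div_le_one hr).2 hsr)
  rw [layerBarrier, barrier]
  linarith

lemma le_layerBarrier_self (hm : 0 ≤ m) (hε : 0 ≤ ε) (hr : 0 < r) :
    m * (1 - ε) * sphereDefect x₀ ≤ layerBarrier m ε r ρ x₀ x₀ := by
  have hquad : 0 ≤ m * ε / r * sphereDefect x₀ ^ 2 := by positivity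
  simp only [layerBarrier, barrier, sub_self, norm_zero]
  linarith

lemma sub_layerBarrier_lt_of_boundary (hm : 0 < m) (hε : 0 < ε) (hr : 0 < r) (hρ : 0 < ρ)
    (hu : ∀ x ∈ Metric.ball 0 1, 0 ≤ u x) (hur : ∀ x, r ≤ sphereDefect x → m * sphereDefect x ≤ u x)
    (hx₀ : r / 2 ≤ sphereDefect x₀) (hux₀ : u x₀ < m * (1 - 2 * ε) * sphereDefect x₀)
    (hx : x ∈ closedLayer x₀ ρ (ε * r / 4) r \ openLayer x₀ ρ (ε * r / 4) r) :
    u x₀ - layerBarrier m ε r ρ x₀ x₀ + m * ε * r / (4 * ρ) * ρ <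
      u x - layerBarrier m ε r ρ x₀ x := by
  have hη : 0 < ε * r / 4 := by positivity
  have hcenter : u x₀ - layerBarrier m ε r ρ x₀ x₀ + m * ε * r / (4 * ρ) * ρ <
      -(m * (ε * r / 4)) := by
    have hself := le_layerBarrier_self (x₀ := x₀) (ρ := ρ) hm.le hε.le hr
    have hdrop : m * ε * (r / 2) ≤ m * ε * sphereDefect x₀ := by gcongr
    have hslope : m * ε * r / (4 * ρ) * ρ = m * ε * r / 4 := by field_simp
    linarith
  have hbarrier : layerBarrier m ε r ρ x₀ x ≤ _ :=
    layerBarrier_le hm.le hε.le hr (hη.le.trans hx.1.2.1) hx.1.2.2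
  have hux := hu x (closedLayer_subset_ball hη hx.1)
  have hloc : 0 ≤ m * r / ρ ^ 2 * ‖x - x₀‖ ^ 2 := by positivity
  have hmη : 0 < m * (ε * r / 4) := by positivity
  refine hcenter.trans_le ?_
  rcases eq_of_mem_closedLayer_diff_openLayer hx with h | h | h
  · rw [h, div_mul_cancel₀ _ (by positivity)] at hbarrier
    linarith [mul_le_mul_of_nonneg_left hx.1.2.2 hm.le]
  · rw [h] at hbarrier
    linarith
  · linarith [hur x h.ge]

lemma norm_fderiv_layerBarrier_le (hm : 0 ≤ m) (hε : 0 ≤ ε) (hε₁ : ε ≤ 1) (hr : 0 < r)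
    (hrρ : r ≤ ρ) (hη : 0 < η) (hx : x ∈ openLayer x₀ ρ η r) :
    ‖fderiv ℝ (layerBarrier m ε r ρ x₀) x‖ ≤ 4 * m := by
  have hρ : 0 < ρ := hr.trans_le hrρ
  have hball := closedLayer_subset_ball hη (openLayer_subset_closedLayer hx)
  have hquad : 2 * (m * ε / r) * sphereDefect x ≤ 2 * (m * ε) := calc
    2 * (m * ε / r) * sphereDefect x ≤ 2 * (m * ε / r) * r := by gcongr; exact hx.2.2.le
    _ = 2 * (m * ε) := by field_simp
  have hloc : 2 * (m * r / ρ ^ 2) * ‖x - x₀‖ ≤ 2 * m := calc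
    2 * (m * r / ρ ^ 2) * ‖x - x₀‖ ≤ 2 * (m * r / ρ ^ 2) * ρ := by
      gcongr
      exact (mem_ball_iff_norm.1 hx.1).le
    _ = 2 * m * (r / ρ) := by field_simp
    _ ≤ 2 * m := mul_le_of_le_one_right (by positivity) ((div_le_one hρ).2 hrρ)
  refine (norm_fderiv_barrier_le (mul_nonneg hm (sub_nonneg.2 hε₁)) (by positivity)
    (by positivity) hball).trans ?_
  linarith [mul_le_of_le_one_right hm hε₁]

lemma trace_mul_hess_layerBarrier_nonneg {n : ℕ} {lam Lam : ℝ}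
    {A : Matrix (Fin n) (Fin n) ℝ} {x₀ x : EuclideanSpace ℝ (Fin n)} (hlam : 0 ≤ lam)
    (hLam : 0 ≤ Lam) (hA : IsElliptic lam Lam A) (hm : 0 ≤ m) (hε : 0 ≤ ε) (hε₁ : ε ≤ 1)
    (hr : 0 < r) (hr₁ : r ≤ 1 / 4) (hη : 0 < η)
    (hbalance : 2 * (n * Lam) * (r + r ^ 2 / ρ ^ 2) ≤ lam * ε)
    (hx : x ∈ openLayer x₀ ρ η r) :
    0 ≤ (A * hess n (layerBarrier m ε r ρ x₀) x).trace := by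
  have hnorm : 1 / 2 ≤ ‖x‖ ^ 2 := by
    have hsr := hx.2.2
    rw [sphereDefect] at hsr
    linarith
  have hfirst : m * (1 - ε) + 2 * (m * ε / r) * sphereDefect x + 2 * (m * r / ρ ^ 2) ≤
      m * (2 + 2 * r / ρ ^ 2) := calc
    _ ≤ m * (1 - ε) + 2 * (m * ε / r) * r + 2 * (m * r / ρ ^ 2) := by gcongr; exact hx.2.2.le
    _ = m * (1 + ε + 2 * r / ρ ^ 2) := by field_simp; ring
    _ ≤ m * (2 + 2 * r / ρ ^ 2) := by gcongr; linarith
  refine le_trans ?_ (le_trace_mul_hess_barrier hA (mul_nonneg hm (sub_nonneg.2 hε₁))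
    (by positivity) (by positivity)
    (closedLayer_subset_ball hη (openLayer_subset_closedLayer hx)))
  have hdominant : m * (2 + 2 * r / ρ ^ 2) * (n * Lam) ≤ 2 * (m * ε / r) * lam * ‖x‖ ^ 2 := calc
    m * (2 + 2 * r / ρ ^ 2) * (n * Lam)
        = m / r * (2 * (n * Lam) * (r + r ^ 2 / ρ ^ 2)) := by field_simp
    _ ≤ m / r * (lam * ε) := by gcongr
    _ = 2 * (m * ε / r) * lam * (1 / 2) := by ring
    _ ≤ 2 * (m * ε / r) * lam * ‖x‖ ^ 2 := by gcongr
  linarith [mul_le_mul_of_nonneg_right hfirst (mul_nonneg n.cast_nonneg hLam)]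

end Layer

section LayerImprovement

variable {n : ℕ} {lam Lam q ε m r ρ : ℝ} {K : NNReal} {b u : EuclideanSpace ℝ (Fin n) → ℝ}
  {x₀ : EuclideanSpace ℝ (Fin n)}

lemma IsNonnegSupersolution.slope_le_of_lt (hu : IsNonnegSupersolution n lam Lam q K b u)
    (hn : n ≠ 0) (hlam : 0 < lam) (hLam : lam ≤ Lam) (hq : (n : ℝ) ≤ q) (hε : 0 < ε) (hε₁ : ε ≤ 1)
    (hr : 0 < r) (hr₁ : r ≤ 1 / 4) (hrρ : r ≤ ρ)
    (hbalance : 2 * (n * Lam) * (r + r ^ 2 / ρ ^ 2) ≤ lam * ε) (hm : 0 < m)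
    (hur : ∀ x, r ≤ sphereDefect x → m * sphereDefect x ≤ u x) (hx₀ : r / 2 ≤ sphereDefect x₀)
    (hx₀r : sphereDefect x₀ < r) (hux₀ : u x₀ < m * (1 - 2 * ε) * sphereDefect x₀) :
    m * ε * r / (4 * ρ) ≤
      (4 * m + m * ε * r / (4 * ρ)) / lam * (driftFactor n q K * ρ ^ (1 - n / q)) := by
  have hρ : 0 < ρ := hr.trans_le hrρ
  have hη : 0 < ε * r / 4 := by positivity
  have hηr : ε * r / 4 < r / 2 := by linarith [mul_le_of_le_one_left hr.le hε₁]
  simpa only [zero_mul, add_zero] using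
    hu.slope_le hn hlam hLam hq (φ := layerBarrier m ε r ρ x₀) (B := 0) contDiff_barrier
      isCompact_closedLayer isOpen_openLayer openLayer_subset_closedLayer
      (closedLayer_subset_ball hη)
      ⟨Metric.mem_ball_self hρ, hηr.trans_le hx₀, hx₀r⟩ (fun x hx => mem_closedBall_iff_norm.1 hx.1)
      (fun x hx => sub_layerBarrier_lt_of_boundary hm hε hr hρ hu.nonneg hur hx₀ hux₀ hx)
      (by positivity) hρ le_rfl
      (fun x hx => norm_fderiv_layerBarrier_le hm.le hε.le hε₁ hr hrρ hη hx)
      (fun x hx A hA => by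
        simpa using trace_mul_hess_layerBarrier_nonneg hlam.le (hlam.le.trans hLam) hA hm.le hε.le
          hε₁ hr hr₁ hη hbalance hx)
      (by
        rw [← Measure.addHaar_ball_center volume x₀ ρ]
        exact measure_mono fun x hx => hx.1.1)

lemma IsNonnegSupersolution.layer_improvement (hu : IsNonnegSupersolution n lam Lam q K b u)
    (hn : n ≠ 0) (hlam : 0 < lam) (hLam : lam ≤ Lam) (hq : (n : ℝ) ≤ q) (hε : 0 < ε) (hε₁ : ε ≤ 1)
    (hr : 0 < r) (hr₁ : r ≤ 1 / 4) (hrρ : r ≤ ρ)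
    (hbalance : 2 * (n * Lam) * (r + r ^ 2 / ρ ^ 2) ≤ lam * ε)
    (hdrift : 20 * driftFactor n q K * ρ ^ (1 - n / q + 1) < lam * ε * r) (hm : 0 < m)
    (hur : ∀ x, r ≤ sphereDefect x → m * sphereDefect x ≤ u x) (hx₀ : r / 2 ≤ sphereDefect x₀) :
    m * (1 - 2 * ε) * sphereDefect x₀ ≤ u x₀ := by
  have hρ : 0 < ρ := hr.trans_le hrρ
  rcases le_or_gt r (sphereDefect x₀) with hrx₀ | hx₀r
  · have hdrop : m * (1 - 2 * ε) * sphereDefect x₀ ≤ m * sphereDefect x₀ :=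
      mul_le_mul_of_nonneg_right (mul_le_of_le_one_right hm.le (by linarith)) (by linarith)
    exact hdrop.trans (hur x₀ hrx₀)
  by_contra! hux₀
  have hslope := hu.slope_le_of_lt hn hlam hLam hq hε hε₁ hr hr₁ hrρ hbalance hm hur hx₀ hx₀r hux₀
  have hN := driftFactor_nonneg (n := n) (q := q) (K := K)
  have ht : 4 * m + m * ε * r / (4 * ρ) ≤ 5 * m := by
    have hεr : ε * r ≤ 1 * ρ := mul_le_mul hε₁ hrρ hr.le zero_le_one
    have hslope_le : m * ε * r / (4 * ρ) ≤ m := by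
      rw [div_le_iff₀ (by positivity)]
      nlinarith
    linarith
  refine hdrift.not_ge (le_of_mul_le_mul_left ?_ hm)
  calc m * (lam * ε * r) = 4 * lam * ρ * (m * ε * r / (4 * ρ)) := by field_simp
    _ ≤ 4 * lam * ρ * (5 * m / lam * (driftFactor n q K * ρ ^ (1 - n / q))) := by
        gcongr
        exact hslope.trans (by gcongr)
    _ = m * (20 * driftFactor n q K * ρ ^ (1 - n / q + 1)) := by
        rw [Real.rpow_add_one hρ.ne']
        field_simp
        ring

lemma exists_scale_balance {α P N : ℝ} (hα : 0 < α) (hα₁ : α ≤ 1) (hP : 0 ≤ P) (hN : 0 ≤ N) :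
    ∃ C β : ℝ, 0 < C ∧ 0 < β ∧ ∀ r : ℝ, 0 < r → r ≤ 1 → ∃ ρ : ℝ, r ≤ ρ ∧
      P * (r + r ^ 2 / ρ ^ 2) ≤ C * r ^ β ∧ N * ρ ^ (α + 1) < C * r ^ β * r := by
  have hβ₁ : 2 * α / (3 + α) ≤ 1 := (div_le_one (by positivity)).2 (by linarith)
  refine ⟨2 * P + N + 1, 2 * α / (3 + α), by positivity, by positivity, fun r hr hr₁ => ?_⟩
  -- `ρ` is chosen so that `r² / ρ²` and `ρ ^ (1 + α) / r` are the same power of `r`.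
  have hpow : 0 < r ^ (2 * α / (3 + α)) := Real.rpow_pos_of_pos hr _
  have hlinear : r ≤ r ^ (2 * α / (3 + α)) := by
    simpa using Real.rpow_le_rpow_of_exponent_ge hr hr₁ hβ₁
  have hsquare : r ^ 2 / (r ^ (3 / (3 + α))) ^ 2 = r ^ (2 * α / (3 + α)) := by
    rw [← Real.rpow_natCast, ← Real.rpow_natCast, ← Real.rpow_mul hr.le, ← Real.rpow_sub hr]
    congr 1
    push_cast
    field_simp
    ring
  have hdrift : (r ^ (3 / (3 + α))) ^ (α + 1) = r ^ (2 * α / (3 + α)) * r := by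
    rw [← Real.rpow_mul hr.le, ← Real.rpow_add_one hr.ne']
    congr 1
    field_simp
    ring
  refine ⟨r ^ (3 / (3 + α)), ?_, ?_, ?_⟩
  · simpa using Real.rpow_le_rpow_of_exponent_ge hr hr₁
      ((div_le_one (by positivity)).2 (by linarith : (3 : ℝ) ≤ 3 + α))
  · rw [hsquare]
    nlinarith [mul_le_mul_of_nonneg_left hlinear hP, mul_nonneg hN hpow.le]
  · rw [hdrift, mul_assoc]
    exact mul_lt_mul_of_pos_right (by linarith) (by positivity)

lemma one_sub_div_mem_Ioo (hn : n ≠ 0) (hq : (n : ℝ) < q) : 1 - n / q ∈ Set.Ioo (0 : ℝ) 1 := by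
  have hn₀ : (0 : ℝ) < n := by exact_mod_cast Nat.pos_of_ne_zero hn
  have hq₀ : 0 < q := hn₀.trans hq
  exact ⟨sub_pos.2 ((div_lt_one hq₀).2 hq), sub_lt_self _ (by positivity)⟩

lemma exists_layer_improvement (hn : n ≠ 0) (hlam : 0 < lam) (hLam : lam ≤ Lam) (hq : (n : ℝ) < q)
    (K : NNReal) :
    ∃ C β : ℝ, 0 < C ∧ 0 < β ∧ ∀ b u : EuclideanSpace ℝ (Fin n) → ℝ,
      IsNonnegSupersolution n lam Lam q K b u → ∀ r, 0 < r → r ≤ 1 / 4 → ∀ m, 0 < m →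
        (∀ x, r ≤ sphereDefect x → m * sphereDefect x ≤ u x) →
        ∀ x, r / 2 ≤ sphereDefect x → m * (1 - C * r ^ β) * sphereDefect x ≤ u x := by
  obtain ⟨hα, hα₁⟩ := one_sub_div_mem_Ioo hn hq
  have hN := driftFactor_nonneg (n := n) (q := q) (K := K)
  have hLam₀ : 0 < Lam := hlam.trans_le hLam
  obtain ⟨C, β, hC, hβ, hscale⟩ := exists_scale_balance (P := 2 * (n * Lam) / lam)
    (N := 20 * driftFactor n q K / lam) hα hα₁.le (by positivity) (by positivity)
  refine ⟨2 * C, β, by positivity, hβ, fun b u hu r hr hr₁ m hm hur x hx => ?_⟩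
  have hs : 0 < sphereDefect x := by linarith
  have hε : 0 < C * r ^ β := by positivity
  rcases le_or_gt (C * r ^ β) 1 with hε₁ | hε₁
  · obtain ⟨ρ, hrρ, hbalance, hdrift⟩ := hscale r hr (by linarith)
    rw [div_mul_eq_mul_div, div_le_iff₀' hlam] at hbalance
    rw [div_mul_eq_mul_div, div_lt_iff₀' hlam, ← mul_assoc] at hdrift
    simpa only [mul_assoc] using
      hu.layer_improvement hn hlam hLam hq.le hε hε₁ hr hr₁ hrρ hbalance hdrift hm hur hx
  · have hneg : m * (1 - 2 * C * r ^ β) * sphereDefect x ≤ 0 :=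
      mul_nonpos_of_nonpos_of_nonneg
        (mul_nonpos_of_nonneg_of_nonpos hm.le (by linarith)) hs.le
    exact hneg.trans (hu.nonneg x (sphereDefect_pos_iff.1 hs))

end LayerImprovement

section DyadicIteration

variable {X : Type*} {s u : X → ℝ} {C β r₀ m θ : ℝ} {x : X}

lemma half_one_add_pow_succ_le (hθ : 0 ≤ θ) (hθ₁ : θ ≤ 1) (k : ℕ) :
    (1 + θ ^ (k + 1)) / 2 ≤ (1 + θ ^ k) / 2 * (1 - (1 - θ) / 2 * θ ^ k) := by
  have hgap : 0 ≤ (1 - θ) * θ ^ k * (1 - θ ^ k) :=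
    mul_nonneg (mul_nonneg (sub_nonneg.2 hθ₁) (pow_nonneg hθ k))
      (sub_nonneg.2 (pow_le_one₀ hθ hθ₁))
  rw [pow_succ]
  linarith

lemma le_of_dyadic_improvement_of_le (hβ : 0 ≤ β) (hr₀ : 0 < r₀)
    (hC : C * r₀ ^ β ≤ (1 - (1 / 2) ^ β) / 2)
    (himprove : ∀ r, 0 < r → r ≤ r₀ → ∀ m, 0 < m → (∀ x, r ≤ s x → m * s x ≤ u x) →
      ∀ x, r / 2 ≤ s x → m * (1 - C * r ^ β) * s x ≤ u x)
    (hm : 0 < m) (hinterior : ∀ x, r₀ ≤ s x → m * s x ≤ u x) (k : ℕ) :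
    ∀ x, r₀ / 2 ^ k ≤ s x → m * ((1 + ((1 / 2) ^ β) ^ k) / 2) * s x ≤ u x := by
  set θ : ℝ := (1 / 2) ^ β
  have hθ : 0 < θ := by positivity
  have hθ₁ : θ ≤ 1 := Real.rpow_le_one (by norm_num) (by norm_num) hβ
  induction k with
  | zero => simpa using hinterior
  | succ k ih =>
    intro x hx
    have hs : 0 ≤ s x := le_trans (by positivity) hx
    have hscale : (r₀ / 2 ^ k) ^ β = r₀ ^ β * θ ^ k := by
      rw [div_eq_mul_one_div, ← one_div_pow, Real.mul_rpow hr₀.le (by positivity),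
        ← Real.rpow_pow_comm (by norm_num)]
    have hloss : C * (r₀ / 2 ^ k) ^ β ≤ (1 - θ) / 2 * θ ^ k := by
      rw [hscale, ← mul_assoc]
      gcongr
    calc m * ((1 + θ ^ (k + 1)) / 2) * s x
        ≤ m * ((1 + θ ^ k) / 2 * (1 - (1 - θ) / 2 * θ ^ k)) * s x := by
          gcongr
          exact half_one_add_pow_succ_le hθ.le hθ₁ k
      _ ≤ m * ((1 + θ ^ k) / 2 * (1 - C * (r₀ / 2 ^ k) ^ β)) * s x := by gcongr
      _ = m * ((1 + θ ^ k) / 2) * (1 - C * (r₀ / 2 ^ k) ^ β) * s x := by ring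
      _ ≤ u x := himprove _ (by positivity) (div_le_self hr₀.le (one_le_pow₀ one_le_two)) _
          (by positivity) ih x (by rwa [div_div, ← pow_succ])

lemma le_of_dyadic_improvement (hβ : 0 ≤ β) (hr₀ : 0 < r₀)
    (hC : C * r₀ ^ β ≤ (1 - (1 / 2) ^ β) / 2)
    (himprove : ∀ r, 0 < r → r ≤ r₀ → ∀ m, 0 < m → (∀ x, r ≤ s x → m * s x ≤ u x) →
      ∀ x, r / 2 ≤ s x → m * (1 - C * r ^ β) * s x ≤ u x)
    (hm : 0 < m) (hinterior : ∀ x, r₀ ≤ s x → m * s x ≤ u x) (hx : 0 < s x) :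
    m / 2 * s x ≤ u x := by
  obtain ⟨k, hk⟩ := exists_pow_lt_of_lt_one (div_pos hx hr₀) (by norm_num : (1 / 2 : ℝ) < 1)
  have hkx : r₀ / 2 ^ k ≤ s x := by
    rw [one_div_pow, lt_div_iff₀ hr₀, one_div_mul_eq_div] at hk
    exact hk.le
  have hθk : 0 ≤ (((1 / 2) ^ β) ^ k : ℝ) := by positivity
  calc m / 2 * s x ≤ m * ((1 + ((1 / 2) ^ β) ^ k) / 2) * s x := by
        gcongr
        linarith [mul_nonneg hm.le hθk]
    _ ≤ u x := le_of_dyadic_improvement_of_le hβ hr₀ hC himprove hm hinterior k x hkx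

end DyadicIteration

section Interior

variable {n : ℕ} {lam Lam q c r₀ ρ δ t : ℝ} {K : NNReal} {b u : EuclideanSpace ℝ (Fin n) → ℝ}
  {D : Set (EuclideanSpace ℝ (Fin n))} {x₀ x : EuclideanSpace ℝ (Fin n)}

lemma neg_le_trace_mul_hess_mul_sphereDefect {A : Matrix (Fin n) (Fin n) ℝ}
    (hA : IsElliptic lam Lam A) (hc : 0 ≤ c) (hx : x ∈ Metric.ball 0 1) :
    -(c * (n * Lam)) ≤ (A * hess n (barrier c 0 0 x₀) x).trace := by
  simpa using le_trace_mul_hess_barrier (x₀ := x₀) hA hc le_rfl le_rfl hx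

lemma norm_fderiv_mul_sphereDefect_le (hc : 0 ≤ c) (hx : x ∈ Metric.ball 0 1) :
    ‖fderiv ℝ (barrier c 0 0 x₀) x‖ ≤ c := by
  simpa using norm_fderiv_barrier_le (x₀ := x₀) hc le_rfl le_rfl hx

lemma IsNonnegSupersolution.le_drift_of_mem_contactSet
    (hu : IsNonnegSupersolution n lam Lam q K b u) (hlam : 0 ≤ lam) (hLam : lam ≤ Lam)
    (hc : 0 < c) (hcLam : c * (n * Lam) ≤ 1 / 2) (ht : t ≤ c) (hx : x ∈ Metric.ball 0 1)
    (hcontact : x ∈ contactSet (u - barrier c 0 0 x₀) D t)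
    (hstrict : 1 ≤ -pucciDrift n lam Lam b u x) : 1 / (4 * c) ≤ b x := by
  have hφ : ContDiffAt ℝ 2 (barrier c 0 0 x₀) x := contDiff_barrier.contDiffAt
  have hpucci := mul_trace_hess_sub_le_pucciDrift hLam (hu.contDiffAt hx) hφ (hu.drift_nonneg x hx)
    hcontact (fun A hA => neg_le_trace_mul_hess_mul_sphereDefect hA hc.le hx)
    (norm_fderiv_mul_sphereDefect_le hc.le hx)
  have htrace : 0 ≤ lam * (hess n (u - barrier c 0 0 x₀) x).trace :=
    mul_nonneg hlam
      (posSemidef_hess ((hu.contDiffAt hx).sub hφ) hcontact.2.2).trace_nonneg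
  have hslope : b x * (c + t) ≤ b x * (2 * c) :=
    mul_le_mul_of_nonneg_left (by linarith) (hu.drift_nonneg x hx)
  rw [div_le_iff₀ (by positivity)]
  linarith

lemma IsNonnegSupersolution.volume_contactSet_le (hu : IsNonnegSupersolution n lam Lam q K b u)
    (hlam : 0 ≤ lam) (hLam : lam ≤ Lam) (hq : 0 < q) (hc : 0 < c) (hcLam : c * (n * Lam) ≤ 1 / 2)
    (ht : t ≤ c) (hDmeas : MeasurableSet D) (hD : D ⊆ Metric.ball 0 1)
    (hstrict : ENNReal.ofReal (1 - δ) * volume (Metric.ball (0 : EuclideanSpace ℝ (Fin n)) 1) ≤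
      volume {x ∈ Metric.ball 0 1 | 1 ≤ -pucciDrift n lam Lam b u x}) :
    volume (contactSet (u - barrier c 0 0 x₀) D t) ≤ ENNReal.ofReal ((4 * c * K) ^ q) +
      ENNReal.ofReal δ * volume (Metric.ball (0 : EuclideanSpace ℝ (Fin n)) 1) := by
  set μ := volume.restrict (Metric.ball (0 : EuclideanSpace ℝ (Fin n)) 1)
  set Γ := contactSet (u - barrier c 0 0 x₀) D t
  set T := {x | 1 / (4 * c) ≤ b x}
  have hΓ : Γ ⊆ Metric.ball 0 1 := fun x hx => hD hx.1
  have hlarge : μ T ≤ ENNReal.ofReal ((4 * c * K) ^ q) := by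
    have hmarkov := measure_le_ofReal_rpow_of_eLpNorm_le hq (a := 1 / (4 * c)) (by positivity)
      hu.drift_aemeasurable.aestronglyMeasurable (hu.eLpNorm_drift_le hq)
    rwa [div_div_eq_mul_div, div_one, mul_comm (K : ℝ)] at hmarkov
  have hsmall : μ (Γ \ T) ≤ ENNReal.ofReal δ * μ (Metric.ball 0 1) := by
    refine measure_le_of_disjoint_of_le_measure
      (S := {x ∈ Metric.ball 0 1 | 1 ≤ -pucciDrift n lam Lam b u x})
      ((measurableSet_contactSet hDmeas _ t).nullMeasurableSet.diff
        (nullMeasurableSet_le aemeasurable_const hu.drift_aemeasurable))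
      (fun x hx => hx.1) (fun x hx => hΓ hx.1) ?_ ?_ ?_
    · exact Set.disjoint_left.2 fun x hxS hxE => hxE.2
        (hu.le_drift_of_mem_contactSet hlam hLam hc hcLam ht hxS.1 hxE.1 hxS.2)
    · rw [Measure.restrict_apply_self]
      exact measure_ball_lt_top.ne
    · rwa [Measure.restrict_apply_self, Measure.restrict_eq_self _ fun x hx => hx.1]
  calc volume Γ = μ Γ := (Measure.restrict_eq_self _ hΓ).symm
    _ ≤ μ T + μ (Γ \ T) := by
      refine (measure_le_inter_add_sdiff μ Γ T).trans ?_
      gcongr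
      exact Set.inter_subset_right
    _ ≤ _ := by
      rw [Measure.restrict_apply_self] at hsmall
      exact add_le_add hlarge hsmall

lemma IsNonnegSupersolution.slope_le_of_lt_interior
    (hu : IsNonnegSupersolution n lam Lam q K b u)
    (hn : n ≠ 0) (hlam : 0 < lam) (hLam : lam ≤ Lam) (hq : (n : ℝ) ≤ q) (hc : 0 < c)
    (hr₀ : 0 < r₀) (hρ : 0 < ρ) (hx₀ : r₀ ≤ sphereDefect x₀) (hux₀ : u x₀ < c / 2 * sphereDefect x₀)
    (hvol : volume (contactSet (u - barrier c 0 0 x₀) (openLayer x₀ 2 (r₀ / 4) 1) (c * r₀ / 8)) ≤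
      volume (Metric.ball (0 : EuclideanSpace ℝ (Fin n)) ρ)) :
    c * r₀ / 8 ≤ (c + c * r₀ / 8) / lam * (driftFactor n q K * ρ ^ (1 - n / q)) +
      c * (n * Lam) / lam * ρ := by
  have hη : 0 < r₀ / 4 := by positivity
  have hLam₀ : 0 < Lam := hlam.trans_le hLam
  have hs₀ : sphereDefect x₀ < 1 := (sphereDefect_le_half x₀).trans_lt one_half_lt_one
  have hball {x} (hx : x ∈ openLayer x₀ 2 (r₀ / 4) 1) : x ∈ Metric.ball 0 1 :=
    closedLayer_subset_ball hη (openLayer_subset_closedLayer hx)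
  refine hu.slope_le hn hlam hLam hq contDiff_barrier isCompact_closedLayer isOpen_openLayer
    openLayer_subset_closedLayer (closedLayer_subset_ball hη)
    ⟨Metric.mem_ball_self two_pos, by linarith, hs₀⟩
    (fun x hx => mem_closedBall_iff_norm.1 hx.1) (fun x hx => ?_) (by positivity) hρ
    (by positivity) (fun x hx => norm_fderiv_mul_sphereDefect_le hc.le (hball hx))
    (fun x hx A hA => ?_) hvol
  · have hx₁ := closedLayer_subset_ball hη hx.1
    have hx₀₁ := sphereDefect_pos_iff.1 (hr₀.trans_le hx₀)
    rcases eq_of_mem_closedLayer_diff_openLayer hx with h | h | h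
    · rw [mem_ball_zero_iff] at hx₁ hx₀₁
      linarith [norm_sub_le x x₀]
    · have hcenter := mul_le_mul_of_nonneg_left hx₀ hc.le
      simp only [barrier, h, zero_mul, add_zero, sub_zero]
      linarith [hu.nonneg x hx₁]
    · linarith [sphereDefect_le_half x]
  · rw [mul_div_cancel₀ _ hlam.ne']
    exact neg_le_trace_mul_hess_mul_sphereDefect hA hc.le (hball hx)

open Filter Topology in
lemma exists_radius_slope_lt {N P α ε : ℝ} (hα : 0 < α) (hε : 0 < ε) :
    ∃ ρ : ℝ, 0 < ρ ∧ N * ρ ^ α + P * ρ < ε := by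
  have hlim : Tendsto (fun ρ : ℝ => N * ρ ^ α + P * ρ) (𝓝[>] 0) (𝓝 0) := by
    have hcont : Continuous fun ρ : ℝ => N * ρ ^ α + P * ρ :=
      ((Real.continuous_rpow_const hα.le).const_mul N).add (continuous_const_mul P)
    simpa [Real.zero_rpow hα.ne'] using (hcont.tendsto 0).mono_left nhdsWithin_le_nhds
  obtain ⟨ρ, hρε, hρ⟩ := ((hlim.eventually_lt_const hε).and self_mem_nhdsWithin).exists
  exact ⟨ρ, hρ, hρε⟩

open Filter Topology in
lemma exists_pos_mul_lt_and_mul_rpow_lt {P N q ε ε' : ℝ} (hq : 0 < q) (hε : 0 < ε) (hε' : 0 < ε') :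
    ∃ c : ℝ, 0 < c ∧ c * P < ε ∧ (4 * c * N) ^ q < ε' := by
  have hlinear : Tendsto (fun c : ℝ => c * P) (𝓝[>] 0) (𝓝 0) := by
    simpa using ((continuous_mul_const P).tendsto 0).mono_left nhdsWithin_le_nhds
  have hpower : Tendsto (fun c : ℝ => (4 * c * N) ^ q) (𝓝[>] 0) (𝓝 0) := by
    have hcont : Continuous fun c : ℝ => (4 * c * N) ^ q :=
      (by fun_prop : Continuous fun c : ℝ => 4 * c * N).rpow_const fun _ => .inr hq.le
    simpa [Real.zero_rpow hq.ne'] using (hcont.tendsto 0).mono_left nhdsWithin_le_nhds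
  obtain ⟨c, ⟨hcε, hcε'⟩, hc⟩ := (((hlinear.eventually_lt_const hε).and
    (hpower.eventually_lt_const hε')).and self_mem_nhdsWithin).exists
  exact ⟨c, hc, hcε, hcε'⟩

lemma exists_interior_lower_bound (hn : n ≠ 0) (hlam : 0 < lam) (hLam : lam ≤ Lam)
    (hq : (n : ℝ) < q) (K : NNReal) (hr₀ : 0 < r₀) :
    ∃ δ m : ℝ, 0 < δ ∧ 0 < m ∧ ∀ b u : EuclideanSpace ℝ (Fin n) → ℝ,
      IsNonnegSupersolution n lam Lam q K b u →
      ENNReal.ofReal (1 - δ) * volume (Metric.ball (0 : EuclideanSpace ℝ (Fin n)) 1) ≤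
        volume {x ∈ Metric.ball 0 1 | 1 ≤ -pucciDrift n lam Lam b u x} →
      ∀ x, r₀ ≤ sphereDefect x → m * sphereDefect x ≤ u x := by
  have hq₀ : 0 < q := (Nat.cast_nonneg n).trans_lt hq
  have hω := unitBallVolume_pos n
  set N := driftFactor n q K
  have hN : 0 ≤ N := driftFactor_nonneg
  obtain ⟨ρ, hρ, hslope⟩ := exists_radius_slope_lt (N := 2 * N) (P := n * Lam) (ε := lam * r₀ / 8)
    (one_sub_div_mem_Ioo hn hq).1 (by positivity)
  obtain ⟨c, hc, hcLam, hcK⟩ := exists_pos_mul_lt_and_mul_rpow_lt (P := n * Lam) (N := K)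
    (ε := 1 / 2) (ε' := unitBallVolume n * ρ ^ n / 2) hq₀ (by norm_num) (by positivity)
  refine ⟨ρ ^ n / 2, c / 2, by positivity, by positivity, fun b u hu hstrict x₀ hx₀ => ?_⟩
  by_contra! hux₀
  have ht : c * r₀ / 8 ≤ c := by
    nlinarith [sphereDefect_le_half x₀]
  have hvol : volume (contactSet (u - barrier c 0 0 x₀) (openLayer x₀ 2 (r₀ / 4) 1) (c * r₀ / 8)) ≤
      volume (Metric.ball (0 : EuclideanSpace ℝ (Fin n)) ρ) := by
    refine (hu.volume_contactSet_le hlam.le hLam hq₀ hc hcLam.le ht isOpen_openLayer.measurableSet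
      (openLayer_subset_closedLayer.trans (closedLayer_subset_ball (by positivity)))
      hstrict).trans ?_
    rw [volume_ball_zero hρ, volume_ball_zero one_pos, ← ENNReal.ofReal_mul (by positivity),
      ← ENNReal.ofReal_add (by positivity) (by positivity)]
    refine ENNReal.ofReal_le_ofReal ?_
    rw [one_pow]
    linarith
  have hbound := hu.slope_le_of_lt_interior hn hlam hLam hq.le hc hr₀ hρ hx₀ hux₀ hvol
  refine hslope.not_ge (le_of_mul_le_mul_left ?_ hc)
  calc c * (lam * r₀ / 8) = lam * (c * r₀ / 8) := by ring
    _ ≤ lam * ((2 * c) / lam * (N * ρ ^ (1 - n / q)) + c * (n * Lam) / lam * ρ) := by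
        gcongr
        exact hbound.trans (by gcongr; linarith)
    _ = c * (2 * N * ρ ^ (1 - n / q) + n * Lam * ρ) := by field_simp

end Interior

lemma exists_radius_mul_rpow_le {C β ε : ℝ} (hC : 0 < C) (hβ : 0 < β) (hε : 0 < ε) :
    ∃ r, 0 < r ∧ r ≤ 1 / 4 ∧ C * r ^ β ≤ ε := by
  refine ⟨min (1 / 4) ((ε / C) ^ β⁻¹), by positivity, min_le_left _ _, ?_⟩
  calc C * min (1 / 4) ((ε / C) ^ β⁻¹) ^ β ≤ C * ((ε / C) ^ β⁻¹) ^ β := by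
        gcongr
        exact min_le_right _ _
    _ = ε := by rw [Real.rpow_inv_rpow (by positivity) hβ.ne', mul_div_cancel₀ _ hC.ne']

theorem qsmp_first_step_general {n : ℕ} {lam Lam q : ℝ} (hn : n ≠ 0) (hlam : 0 < lam)
    (hLam : lam ≤ Lam) (hq : (n : ℝ) < q) (K : NNReal) :
    ∃ δ₁ c₁ : ℝ, 0 < δ₁ ∧ 0 < c₁ ∧ ∀ b u : EuclideanSpace ℝ (Fin n) → ℝ,
      IsNonnegSupersolution n lam Lam q K b u →
      ENNReal.ofReal (1 - δ₁) * volume (Metric.ball (0 : EuclideanSpace ℝ (Fin n)) 1) ≤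
        volume {x ∈ Metric.ball 0 1 | 1 ≤ -pucciDrift n lam Lam b u x} →
      ∀ x ∈ Metric.ball (0 : EuclideanSpace ℝ (Fin n)) 1, c₁ * (1 - ‖x‖) ≤ u x := by
  obtain ⟨C, β, hC, hβ, himprove⟩ := exists_layer_improvement hn hlam hLam hq K
  have hθ : ((1 / 2) ^ β : ℝ) < 1 := Real.rpow_lt_one (by norm_num) (by norm_num) hβ
  obtain ⟨r₀, hr₀, hr₀_le, hCr₀⟩ := exists_radius_mul_rpow_le hC hβ (half_pos (sub_pos.2 hθ))
  obtain ⟨δ, m, hδ, hm, hinterior⟩ := exists_interior_lower_bound hn hlam hLam hq K hr₀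
  refine ⟨δ, m / 4, hδ, by positivity, fun b u hu hstrict x hx => ?_⟩
  calc m / 4 * (1 - ‖x‖) = m / 2 * ((1 - ‖x‖) / 2) := by ring
    _ ≤ m / 2 * sphereDefect x := by
        gcongr
        exact half_one_sub_norm_le_sphereDefect (mem_ball_zero_iff.1 hx).le
    _ ≤ u x := le_of_dyadic_improvement hβ.le hr₀ hCr₀
        (fun r hr hrr₀ => himprove b u hu r hr (hrr₀.trans hr₀_le)) hm (hinterior b u hu hstrict)
        (sphereDefect_pos_iff.2 hx)

/-- First step of the quantitative strong maximum principle. -/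
theorem qsmp_first_step
    (n : ℕ) (hn : 2 ≤ n) (lam Lam : ℝ) (hlam : 0 < lam) (hLam : lam ≤ Lam)
    (q K : ℝ) (hq : (n : ℝ) < q) (hK : 0 < K) :
    ∃ δ₁ c₁ : ℝ, 0 < δ₁ ∧ 0 < c₁ ∧
      ∀ b u : EuclideanSpace ℝ (Fin n) → ℝ,
        ContinuousOn b (Metric.ball 0 1) →
        (∀ x ∈ Metric.ball (0 : EuclideanSpace ℝ (Fin n)) 1, 0 ≤ b x) →
        LpNormE n q b (Metric.ball 0 1) ≤ ENNReal.ofReal K →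
        ContDiffOn ℝ 2 u (Metric.ball 0 1) →
        (∀ x ∈ Metric.ball (0 : EuclideanSpace ℝ (Fin n)) 1, 0 ≤ u x) →
        (∀ x ∈ Metric.ball (0 : EuclideanSpace ℝ (Fin n)) 1,
          pucciMinus n lam Lam (hess n u x) - b x * gradNorm n u x ≤ 0) →
        ENNReal.ofReal (1 - δ₁) * volume (Metric.ball (0 : EuclideanSpace ℝ (Fin n)) 1)
            ≤ volume {x ∈ Metric.ball (0 : EuclideanSpace ℝ (Fin n)) 1 |
                1 ≤ -(pucciMinus n lam Lam (hess n u x) - b x * gradNorm n u x)} →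
        ∀ x ∈ Metric.ball (0 : EuclideanSpace ℝ (Fin n)) 1, c₁ * (1 - ‖x‖) ≤ u x := by
  obtain ⟨δ₁, c₁, hδ₁, hc₁, hbound⟩ :=
    qsmp_first_step_general (by lia : n ≠ 0) hlam hLam hq K.toNNReal
  exact ⟨δ₁, c₁, hδ₁, hc₁, fun b u hb hb₀ hbK hu hu₀ hg =>
    hbound b u ⟨hb.aemeasurable measurableSet_ball, hb₀, hbK, hu, hu₀, hg⟩⟩
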